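/- arXiv:2605.03449 — 2 statements merged into one kernel-verified Lean document; each statement's English description precedes it below -/
import Mathlib

section
/- Let R be a finite Dedekind group (every subgroup of R is normal in R). If R is not cyclic, then for every subgroup H of R there exists an automorphism α of R with α(H) = H that is not a power automorphism, i.e., α(x) ∉ ⟨x⟩ for some x ∈ R. -/
theorem aux_index {n : ℕ} : ∀ {p : ℕ}, p.Prime → ∀ (G : Type*) [CommGroup G] [Finite G],
    Nat.card G = n → p ∣ n → ∃ M : Subgroup G, M.index = p := by
  induction n using Nat.strong_induction_on with
  | _ n ih =>
    intro p hp G _ _ hn hd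
    by_cases h1 : n = p
    · exact ⟨⊥, by rw [Subgroup.index_bot, hn, h1]⟩
    · obtain ⟨m, rfl⟩ := hd
      have hm : m ≠ 1 := by rintro rfl; simp at h1
      have hpos : 0 < p * m := hn ▸ Nat.card_pos
      obtain ⟨q, hq, l, rfl⟩ := Nat.exists_prime_and_dvd hm
      have := Fact.mk hq
      obtain ⟨y, hy⟩ := exists_prime_orderOf_dvd_card' (G := G) q (by rw [hn]; exact ⟨p * l, by ring⟩)
      have hc := Subgroup.card_eq_card_quotient_mul_card_subgroup (Subgroup.zpowers y)
      rw [hn, Nat.card_zpowers, hy] at hc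
      have hc' : Nat.card (G ⧸ Subgroup.zpowers y) = p * l := by
        apply Nat.eq_of_mul_eq_mul_right hq.pos
        rw [← hc]; ring
      have hlt : p * l < p * (q * l) := by
        have : 0 < p * l := hc' ▸ Nat.card_pos
        have := hq.two_le
        nlinarith
      obtain ⟨M, hM⟩ := ih _ hlt hp (G ⧸ Subgroup.zpowers y) hc' ⟨l, rfl⟩
      exact ⟨M.comap (QuotientGroup.mk' _), by
        rw [Subgroup.index_comap_of_surjective _ (QuotientGroup.mk'_surjective _), hM]⟩

theorem aux_cyclic (G : Type*) [CommGroup G] [Finite G]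
    (h : ∀ p : ℕ, p.Prime → Nat.card (powMonoidHom p : G →* G).ker ≤ p) : IsCyclic G := by
  have key : ∀ n : ℕ, 0 < n → Nat.card (powMonoidHom n : G →* G).ker ≤ n := by
    intro n
    induction n using Nat.recOnMul with
    | zero => intro h; omega
    | one =>
      intro _
      have : (powMonoidHom 1 : G →* G).ker = ⊥ := by ext x; simp [MonoidHom.mem_ker]
      rw [this]; simp
    | prime p hp => intro _; exact h p hp
    | mul a b ha hb =>
      intro hab
      have ha' := ha (Nat.pos_of_mul_pos_right hab)
      have hb' := hb (Nat.pos_of_mul_pos_left hab)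
      set K := (powMonoidHom (a * b) : G →* G).ker
      let f : K →* (powMonoidHom b : G →* G).ker :=
        { toFun := fun x => ⟨(x : G) ^ a, by
            have := x.2
            simp only [K, MonoidHom.mem_ker, powMonoidHom_apply] at this ⊢
            rw [← pow_mul]; exact this⟩
          map_one' := by ext; simp
          map_mul' := by intro x y; ext; simp [mul_pow] }
      have h1 := Subgroup.card_eq_card_quotient_mul_card_subgroup f.ker
      have h2 : Nat.card (K ⧸ f.ker) ≤ b := by
        rw [Nat.card_congr (QuotientGroup.quotientKerEquivRange f).toEquiv]
        exact (Subgroup.card_le_card_group _).trans hb'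
      have h3 : Nat.card f.ker ≤ a := by
        refine le_trans ?_ ha'
        refine Nat.card_le_card_of_injective
          (fun x : f.ker => (⟨((x : K) : G), ?_⟩ : (powMonoidHom a : G →* G).ker)) ?_
        · have := x.2
          rw [MonoidHom.mem_ker] at this
          rw [MonoidHom.mem_ker]
          exact congrArg Subtype.val this
        · intro x y hxy
          ext
          simpa using hxy
      rw [h1, mul_comm a b]
      exact Nat.mul_le_mul h2 h3
  classical
  have := Fintype.ofFinite G
  apply isCyclic_of_card_pow_eq_one_le
  intro n hn
  have := key n hn
  rw [Nat.card_eq_fintype_card, Fintype.card_subtype] at this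
  simpa [MonoidHom.mem_ker] using this

theorem aux_map {R : Type*} [Group R] [Finite R] (α : MulAut R) (H : Subgroup R)
    (h : ∀ x ∈ H, α x ∈ H) : Subgroup.map α.toMonoidHom H = H := by
  apply Subgroup.eq_of_le_of_card_ge
  · rintro _ ⟨x, hx, rfl⟩
    exact h x hx
  · rw [Subgroup.card_map_of_injective]
    exact α.injective

theorem aux_comm (R : Type*) [CommGroup R] [Finite R]
    (hnc : ¬ IsCyclic R) (H : Subgroup R) :
    ∃ α : MulAut R, Subgroup.map α.toMonoidHom H = H ∧
      ∃ x : R, α x ∉ Subgroup.zpowers x := by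
  have : ∃ p : ℕ, p.Prime ∧ p < Nat.card (powMonoidHom p : R →* R).ker := by
    by_contra hcon
    push Not at hcon
    exact hnc (aux_cyclic R hcon)
  obtain ⟨p, hp, hT⟩ := this
  have := Fact.mk hp
  set T := (powMonoidHom p : R →* R).ker with hTdef
  have memT : ∀ x, x ∈ T ↔ x ^ p = 1 := fun x => by simp [hTdef, MonoidHom.mem_ker]
  have hprime : ∀ z : R, z ∈ T → z ≠ 1 → orderOf z = p := fun z hz h1 =>
    orderOf_eq_prime ((memT z).1 hz) h1
  -- in a group of prime order
  have hgen : ∀ z w : R, z ∈ T → w ∈ Subgroup.zpowers z → w ≠ 1 → z ∈ Subgroup.zpowers w := by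
    intro z w hz hw hw1
    have hle : Subgroup.zpowers w ≤ Subgroup.zpowers z := by simpa using hw
    have hwT : w ∈ T := (Subgroup.zpowers_le.2 hz) hw
    have hz1 : z ≠ 1 := by rintro rfl; simp at hw; exact hw1 hw
    have : Subgroup.zpowers w = Subgroup.zpowers z := by
      apply Subgroup.eq_of_le_of_card_ge hle
      rw [Nat.card_zpowers, Nat.card_zpowers, hprime _ hwT hw1, hprime _ hz hz1]
    rw [this]; exact Subgroup.mem_zpowers z
  obtain ⟨M, hM, hMH⟩ : ∃ M : Subgroup R, M.index = p ∧ (H ≤ M ∨ T ≤ H) := by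
    by_cases hd : p ∣ H.index
    · obtain ⟨M, hM⟩ := aux_index hp (R ⧸ H) rfl (by simpa [Subgroup.index] using hd)
      refine ⟨M.comap (QuotientGroup.mk' _), by
        rw [Subgroup.index_comap_of_surjective _ (QuotientGroup.mk'_surjective _), hM], Or.inl ?_⟩
      intro x hx
      rw [Subgroup.mem_comap]
      have : (QuotientGroup.mk' H) x = 1 := by simpa using hx
      rw [this]; exact M.one_mem
    · have hpd : p ∣ Nat.card R := by
        have h1 : 1 < Nat.card T := hp.one_lt.trans hT
        have := Finite.one_lt_card_iff_nontrivial.1 h1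
        obtain ⟨z, hz⟩ := exists_ne (1 : T)
        rw [← hprime z z.2 (by simpa using hz)]
        exact orderOf_dvd_natCard _
      obtain ⟨M, hM⟩ := aux_index hp R rfl hpd
      refine ⟨M, hM, Or.inr ?_⟩
      intro z hz
      have hco : Nat.Coprime p H.index := (Nat.Prime.coprime_iff_not_dvd hp).2 hd
      have h1 : z ^ H.index ∈ H := H.pow_index_mem z
      by_cases hz1 : z = 1
      · rw [hz1]; exact H.one_mem
      · have h2 : z ^ H.index ≠ 1 := by
          intro h
          have := orderOf_dvd_of_pow_eq_one h
          rw [hprime z hz hz1] at this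
          exact hd this
        have := hgen z _ hz (Subgroup.npow_mem_zpowers z _) h2
        exact (Subgroup.zpowers_le.2 h1) this
  obtain ⟨x, z, hx, hzT, hzM, hz⟩ : ∃ x z, x ∉ M ∧ z ∈ T ∧ z ∈ M ∧ z ∉ Subgroup.zpowers x := by
    by_cases hTM : T ≤ M
    · obtain ⟨x, hx⟩ : ∃ x, x ∉ M := by
        by_contra hcon
        push Not at hcon
        have : M = ⊤ := (Subgroup.eq_top_iff' M).2 hcon
        rw [this, Subgroup.index_top] at hM
        exact hp.one_lt.ne hM
      have : ∃ z ∈ T, z ∉ Subgroup.zpowers x := by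
        by_contra hcon
        push Not at hcon
        have hle : T ≤ Subgroup.zpowers x := hcon
        have : IsCyclic T := isCyclic_of_injective _ (Subgroup.inclusion_injective hle)
        obtain ⟨t, ht⟩ := IsCyclic.exists_ofOrder_eq_natCard (α := T)
        have : t ^ p = 1 := by ext; simpa using (memT t).1 t.2
        have := Nat.le_of_dvd hp.pos (orderOf_dvd_of_pow_eq_one this)
        omega
      obtain ⟨z, h1, h2⟩ := this
      exact ⟨x, z, hx, h1, hTM h1, h2⟩
    · obtain ⟨x, hxT, hxM⟩ := SetLike.not_le_iff_exists.1 hTM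
      have hni : ¬ Function.Injective (fun t : T => (QuotientGroup.mk (t : R) : R ⧸ M)) := by
        intro hi
        have := Nat.card_le_card_of_injective _ hi
        rw [← Subgroup.index, hM] at this
        omega
      simp only [Function.Injective] at hni
      push Not at hni
      obtain ⟨a, b, hab, hne⟩ := hni
      refine ⟨x, (a : R)⁻¹ * b, hxM, T.mul_mem (T.inv_mem a.2) b.2, QuotientGroup.eq.1 hab, ?_⟩
      intro hmem
      apply hxM
      have hne1 : (a : R)⁻¹ * b ≠ 1 := by
        intro h
        apply hne
        ext
        exact inv_mul_eq_one.1 h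
      exact (Subgroup.zpowers_le.2 (QuotientGroup.eq.1 hab)) (hgen x _ hxT hmem hne1)
  have hz1 : z ≠ 1 := by rintro rfl; exact hz (Subgroup.one_mem _)
  have hc1 : Nat.card (R ⧸ M) = p := hM
  have hc2 : Nat.card (Subgroup.zpowers z) = p := by rw [Nat.card_zpowers, hprime z hzT hz1]
  let e : (R ⧸ M) ≃* Subgroup.zpowers z := mulEquivOfPrimeCardEq hc1 hc2
  let f : R →* R := (Subgroup.zpowers z).subtype.comp (e.toMonoidHom.comp (QuotientGroup.mk' M))
  have hfz : ∀ y, f y ∈ Subgroup.zpowers z := fun y => (e (QuotientGroup.mk' M y)).2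
  have hf1 : ∀ y, f y = 1 ↔ y ∈ M := by intro y; simp [f]
  have hff : ∀ y, f (f y) = 1 := fun y => (hf1 _).2 ((Subgroup.zpowers_le.2 hzM) (hfz y))
  let α : MulAut R :=
    { toFun := fun y => y * f y
      invFun := fun y => y * (f y)⁻¹
      left_inv := by intro y; simp [hff]
      right_inv := by intro y; simp [hff]
      map_mul' := by intro a b; rw [map_mul, mul_mul_mul_comm] }
  have hα : ∀ y, α y = y * f y := fun y => rfl
  refine ⟨α, aux_map _ _ ?_, x, ?_⟩
  · intro y hy
    rw [hα]
    refine H.mul_mem hy ?_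
    rcases hMH with h | h
    · rw [(hf1 y).2 (h hy)]; exact H.one_mem
    · exact h ((Subgroup.zpowers_le.2 hzT) (hfz y))
  · intro h
    rw [hα] at h
    have h2 := (Subgroup.mul_mem_cancel_left _ (Subgroup.mem_zpowers x)).1 h
    exact hz ((Subgroup.zpowers_le.2 h2) (hgen z _ hzT (hfz x) (fun h => hx ((hf1 x).1 h))))

theorem aux_pw {G : Type*} [Group G] {a b d : G} (h : a * b = b * a * d)
    (ha : Commute d a) (hb : Commute d b) (n : ℕ) :
    a ^ n * b = b * a ^ n * d ^ n ∧ a * b ^ n = b ^ n * a * d ^ n ∧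
      (a * b) ^ n * d ^ (n.choose 2) = a ^ n * b ^ n := by
  induction n with
  | zero => simp
  | succ n ih =>
    obtain ⟨h1, h2, h3⟩ := ih
    have ca : Commute (d ^ n) a := ha.pow_left n
    have cb : Commute (d ^ n) b := hb.pow_left n
    have can : Commute d (a ^ n) := ha.pow_right n
    refine ⟨?_, ?_, ?_⟩
    · calc a ^ (n + 1) * b = a ^ n * (a * b) := by rw [pow_succ, mul_assoc]
        _ = (a ^ n * b) * (a * d) := by rw [h]; simp only [mul_assoc]
        _ = b * a ^ n * (d ^ n * a) * d := by rw [h1]; simp only [mul_assoc]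
        _ = b * a ^ (n + 1) * d ^ (n + 1) := by
          rw [ca.eq, pow_succ a, pow_succ d]; simp only [mul_assoc]
    · calc a * b ^ (n + 1) = (a * b ^ n) * b := by rw [pow_succ, mul_assoc]
        _ = b ^ n * a * (d ^ n * b) := by rw [h2]; simp only [mul_assoc]
        _ = b ^ n * (a * b) * d ^ n := by rw [cb.eq]; simp only [mul_assoc]
        _ = b ^ (n + 1) * a * d ^ (n + 1) := by
          rw [h, pow_succ b, pow_succ' d]; simp only [mul_assoc]
    · have hc : (n + 1).choose 2 = n.choose 2 + n := by
        rw [Nat.choose_succ_succ' n 1, Nat.choose_one_right, add_comm]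
      have cbn : Commute (d ^ n) (b ^ n) := cb.pow_right n
      calc (a * b) ^ (n + 1) * d ^ ((n + 1).choose 2)
          = a * b * ((a * b) ^ n * d ^ (n.choose 2)) * d ^ n := by
            rw [hc, pow_succ', pow_add]; simp only [mul_assoc]
        _ = a * b * a ^ n * (b ^ n * d ^ n) := by rw [h3]; simp only [mul_assoc]
        _ = a * (b * a ^ n * d ^ n) * b ^ n := by rw [← cbn.eq]; simp only [mul_assoc]
        _ = a ^ (n + 1) * b ^ (n + 1) := by
          rw [← h1, pow_succ' a, pow_succ' b]; simp only [mul_assoc]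

theorem aux_gen {G : Type*} [Group G] [Finite G] {p : ℕ} (hp : p.Prime) {z w : G}
    (hz : z ^ p = 1) (hw : w ∈ Subgroup.zpowers z) (hw1 : w ≠ 1) : z ∈ Subgroup.zpowers w := by
  have := Fact.mk hp
  have hle : Subgroup.zpowers w ≤ Subgroup.zpowers z := by simpa using hw
  have hwp : w ^ p = 1 := by
    obtain ⟨i, rfl⟩ := hw
    change (z ^ i) ^ p = 1
    rw [← zpow_natCast, zpow_comm, zpow_natCast, hz, one_zpow]
  have hz1 : z ≠ 1 := by rintro rfl; simp at hw; exact hw1 hw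
  have : Subgroup.zpowers w = Subgroup.zpowers z := by
    apply Subgroup.eq_of_le_of_card_ge hle
    rw [Nat.card_zpowers, Nat.card_zpowers, orderOf_eq_prime hwp hw1, orderOf_eq_prime hz hz1]
  rw [this]; exact Subgroup.mem_zpowers z

theorem aux_socle {G : Type*} [Group G] [Finite G] {p : ℕ} (hp : p.Prime) {x c : G} {k : ℕ}
    (hx : orderOf x = p ^ (k + 1)) (hc : c ∈ Subgroup.zpowers x) (hcp : c ^ p = 1) (hc1 : c ≠ 1) :
    c ∈ Subgroup.zpowers (x ^ (p ^ k)) ∧ x ^ (p ^ k) ∈ Subgroup.zpowers c := by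
  have h1 : c ∈ Subgroup.zpowers (x ^ (p ^ k)) := by
    obtain ⟨i, rfl⟩ := hc
    change (x ^ i) ^ p = 1 at hcp
    rw [← zpow_natCast, ← zpow_mul, ← orderOf_dvd_iff_zpow_eq_one, hx] at hcp
    push_cast at hcp
    rw [pow_succ] at hcp
    have hp0 : (p : ℤ) ≠ 0 := by exact_mod_cast hp.ne_zero
    obtain ⟨j, rfl⟩ := Int.dvd_of_mul_dvd_mul_right hp0 hcp
    refine ⟨j, ?_⟩
    change (x ^ (p ^ k)) ^ j = x ^ _
    rw [zpow_mul]
    norm_cast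
  refine ⟨h1, aux_gen hp ?_ h1 hc1⟩
  rw [← pow_mul, ← pow_succ, ← hx, pow_orderOf_eq_one]

theorem aux_comtr {R : Type*} [Group R] (hD : ∀ H : Subgroup R, H.Normal) (x g : R) :
    ∃ c : R, x * g = g * x * c ∧ c ∈ Subgroup.zpowers x ∧ c ∈ Subgroup.zpowers g := by
  refine ⟨x⁻¹ * g⁻¹ * x * g, by group, ?_, ?_⟩
  · have := (hD (Subgroup.zpowers x)).conj_mem x (Subgroup.mem_zpowers x) g⁻¹
    have := Subgroup.mul_mem _ (Subgroup.inv_mem _ (Subgroup.mem_zpowers x)) this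
    simpa [mul_assoc] using this
  · have := (hD (Subgroup.zpowers g)).conj_mem g⁻¹
      (Subgroup.inv_mem _ (Subgroup.mem_zpowers g)) x⁻¹
    have := Subgroup.mul_mem _ this (Subgroup.mem_zpowers g)
    simpa [mul_assoc] using this

theorem aux_zcomm {G : Type*} [Group G] {x c : G} (h : c ∈ Subgroup.zpowers x) : Commute c x := by
  obtain ⟨i, rfl⟩ := h
  exact (Commute.refl x).zpow_left i

theorem aux_four {R : Type*} [Group R] [Finite R] (hD : ∀ H : Subgroup R, H.Normal)
    {p : ℕ} (hp : p.Prime) (k : ℕ) : ∀ (m : ℕ) (x g : R), k ≤ m → orderOf x = p ^ k →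
    orderOf g = p ^ m → x * g ≠ g * x → x ^ p * g = g * x ^ p → p ^ k = 4 ∧ p ^ m = 4 := by
  induction k using Nat.strong_induction_on with
  | _ k ih =>
    intro m x g hkm hx hg hne hxp
    obtain ⟨c, hc, hcx, hcg⟩ := aux_comtr hD x g
    have ccx : Commute c x := aux_zcomm hcx
    have ccg : Commute c g := aux_zcomm hcg
    have hc1 : c ≠ 1 := by rintro rfl; exact hne (by simpa using hc)
    have hcp : c ^ p = 1 := by
      have := (aux_pw hc ccx ccg p).1
      rw [hxp] at this
      simpa using this
    obtain _ | k := k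
    · exfalso
      have : x = 1 := by simpa using hx
      subst this
      simp at hne
    obtain _ | m := m
    · omega
    obtain ⟨hs1, hs2⟩ := aux_socle hp hx hcx hcp hc1
    obtain ⟨ht1, ht2⟩ := aux_socle hp hg hcg hcp hc1
    have hk0 : k ≠ 0 := by
      rintro rfl
      have h1 : x ∈ Subgroup.zpowers c := by simpa using hs2
      have h2 : x ∈ Subgroup.zpowers g := (Subgroup.zpowers_le.2 hcg) h1
      exact hne (aux_zcomm h2).eq
    by_cases hex : 2 = p ^ k ∧ m = k
    · obtain ⟨h2, rfl⟩ := hex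
      have hp2 : p = 2 := by
        have : p ∣ 2 := h2 ▸ dvd_pow_self p hk0
        exact (Nat.prime_dvd_prime_iff_eq hp Nat.prime_two).1 this
      have : p ^ (m + 1) = 4 := by
        rw [pow_succ, ← h2, hp2]; norm_num
      exact ⟨this, this⟩
    exfalso
    have hmem : (x ^ (p ^ k))⁻¹ ∈ Subgroup.zpowers (g ^ (p ^ m)) :=
      Subgroup.inv_mem _ ((Subgroup.zpowers_le.2 ht1) hs2)
    rw [← mem_powers_iff_mem_zpowers] at hmem
    obtain ⟨j, hj⟩ := hmem
    change (g ^ (p ^ m)) ^ j = _ at hj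
    obtain ⟨l, rfl⟩ : ∃ l, m = k + l := ⟨m - k, by omega⟩
    set t := p ^ l * j with ht
    have hw : x * g ^ t = g ^ t * x * c ^ t := (aux_pw hc ccx ccg t).2.1
    have hw3 := (aux_pw hw (ccx.pow_left t) ((ccg.pow_right t).pow_left t) (p ^ k)).2.2
    have hd : (c ^ t) ^ ((p ^ k).choose 2) = 1 := by
      rw [← pow_mul]
      have : p ∣ t * (p ^ k).choose 2 := by
        by_cases hl : l = 0
        · exact (hp.dvd_choose_pow (by norm_num) (fun h => hex ⟨h, by omega⟩)).mul_left _
        · exact ((dvd_pow_self p hl).mul_right _).mul_right _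
      obtain ⟨u, hu⟩ := this
      rw [hu, pow_mul, hcp, one_pow]
    have hx'1 : (x * g ^ t) ^ (p ^ k) = 1 := by
      rw [hd, mul_one] at hw3
      rw [hw3]
      have : (g ^ t) ^ (p ^ k) = (x ^ (p ^ k))⁻¹ := by
        rw [← hj, ← pow_mul, ← pow_mul, ht, pow_add]
        congr 1; ring
      rw [this, mul_inv_cancel]
    obtain ⟨k', hk', hox'⟩ := (Nat.dvd_prime_pow hp).1 (orderOf_dvd_of_pow_eq_one hx'1)
    have hcx' : (x * g ^ t) * g = g * (x * g ^ t) * c := by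
      have e1 : Commute (g ^ t) g := (Commute.refl g).pow_left t
      have e2 : Commute c (g ^ t) := ccg.pow_right t
      calc (x * g ^ t) * g = (x * g) * g ^ t := by rw [mul_assoc, e1.eq, mul_assoc]
        _ = g * x * (c * g ^ t) := by rw [hc]; simp only [mul_assoc]
        _ = _ := by rw [e2.eq]; simp only [mul_assoc]
    have ccx' : Commute c (x * g ^ t) := ccx.mul_right (ccg.pow_right t)
    have := ih k' (by omega) (k + l + 1) (x * g ^ t) g (by omega) hox' hg (by
        intro h
        rw [hcx'] at h
        exact hc1 (by simpa using h))
      (by rw [(aux_pw hcx' ccx' ccg p).1, hcp, mul_one])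
    have h3 := Nat.pow_right_injective hp.two_le (this.1.trans this.2.symm)
    omega

theorem aux_min {R : Type*} [Group R] [Finite R] (H K : Subgroup R) (h : ¬ H ≤ K) :
    ∃ x ∈ H, x ∉ K ∧ ∃ p n : ℕ, p.Prime ∧ orderOf x = p ^ n ∧ x ^ p ∈ K := by
  have hex : ∃ n x, x ∈ H ∧ x ∉ K ∧ orderOf x = n := by
    obtain ⟨x, h1, h2⟩ := SetLike.not_le_iff_exists.1 h
    exact ⟨_, x, h1, h2, rfl⟩
  classical
  obtain ⟨x, hxH, hxK, hxo⟩ := Nat.find_spec hex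
  have hmin : ∀ y ∈ H, orderOf y < orderOf x → y ∈ K := by
    intro y hy hlt
    by_contra hyK
    rw [hxo] at hlt
    exact Nat.find_min hex hlt ⟨y, hy, hyK, rfl⟩
  have hpos : 0 < orderOf x := orderOf_pos x
  have hpr : ∀ q : ℕ, q.Prime → q ∣ orderOf x → x ^ q ∈ K := by
    intro q hq hd
    apply hmin _ (H.pow_mem hxH q)
    rw [orderOf_pow_of_dvd hq.ne_zero hd]
    exact Nat.div_lt_self hpos hq.one_lt
  have hx1 : orderOf x ≠ 1 := by
    intro h1
    rw [orderOf_eq_one_iff] at h1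
    exact hxK (h1 ▸ K.one_mem)
  obtain ⟨p, hp, hpd⟩ := Nat.exists_prime_and_dvd hx1
  refine ⟨x, hxH, hxK, p, _, hp, Nat.eq_prime_pow_of_unique_prime_dvd hpos.ne' ?_, hpr p hp hpd⟩
  intro q hq hqd
  by_contra hqp
  apply hxK
  have hco : Nat.gcd q p = 1 := (Nat.coprime_primes hq hp).2 hqp
  have hb := Nat.gcd_eq_gcd_ab q p
  rw [hco] at hb
  have : x = (x ^ q) ^ (Nat.gcdA q p) * (x ^ p) ^ (Nat.gcdB q p) := by
    rw [← zpow_natCast x q, ← zpow_natCast x p, ← zpow_mul, ← zpow_mul, ← zpow_add, ← hb]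
    simp
  rw [this]
  exact K.mul_mem (K.zpow_mem (hpr q hq hqd) _) (K.zpow_mem (hpr p hp hpd) _)

theorem aux_exists_four {R : Type*} [Group R] [Finite R] (hD : ∀ H : Subgroup R, H.Normal)
    (H : Subgroup R) (hH : ¬ H ≤ Subgroup.center R) :
    ∃ x ∈ H, x ∉ Subgroup.center R ∧ orderOf x = 4 := by
  obtain ⟨x, hxH, hxc, p, k, hp, hxo, hxp⟩ := aux_min H _ hH
  refine ⟨x, hxH, hxc, ?_⟩
  have hK : ¬ (⊤ : Subgroup R) ≤ Subgroup.centralizer {x} := by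
    intro h
    apply hxc
    rw [Subgroup.mem_center_iff]
    intro g
    have := Subgroup.mem_centralizer_iff.1 (h (Subgroup.mem_top g)) x rfl
    exact this.symm
  obtain ⟨g, -, hgK, q, m, hq, hgo, hgq⟩ := aux_min _ _ hK
  have hne : x * g ≠ g * x := by
    intro h
    apply hgK
    rw [Subgroup.mem_centralizer_iff]
    rintro _ rfl
    exact h
  have hxp' : x ^ p * g = g * x ^ p := (Subgroup.mem_center_iff.1 hxp g).symm
  have hgq' : g ^ q * x = x * g ^ q := (Subgroup.mem_centralizer_iff.1 hgq x rfl).symm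
  have hpq : p = q := by
    by_contra hpq
    obtain ⟨c, hc, hcx, hcg⟩ := aux_comtr hD x g
    have h1 : orderOf c ∣ p ^ k := hxo ▸ orderOf_dvd_of_mem_zpowers hcx
    have h2 : orderOf c ∣ q ^ m := hgo ▸ orderOf_dvd_of_mem_zpowers hcg
    have hco : Nat.Coprime (p ^ k) (q ^ m) :=
      Nat.Coprime.pow _ _ ((Nat.coprime_primes hp hq).2 hpq)
    have h3 := Nat.eq_one_of_dvd_coprimes hco h1 h2
    rw [orderOf_eq_one_iff] at h3
    subst h3
    exact hne (by simpa using hc)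
  subst hpq
  rcases le_total k m with h | h
  · rw [hxo]; exact (aux_four hD hp k m x g h hxo hgo hne hxp').1
  · rw [hxo]; exact (aux_four hD hp m k g x h hgo hxo hne.symm hgq').2

theorem aux_noncomm {R : Type*} [Group R] [Finite R] (hD : ∀ H : Subgroup R, H.Normal)
    (H : Subgroup R) (x : R) (hx : x ∉ Subgroup.center R) (ho : orderOf x = 4)
    (hxH : x ∈ H ∨ H ≤ Subgroup.center R) :
    ∃ α : MulAut R, Subgroup.map α.toMonoidHom H = H ∧
      ∃ x : R, α x ∉ Subgroup.zpowers x := by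
  classical
  have hx4 : x ^ 4 = 1 := ho ▸ pow_orderOf_eq_one x
  have hinv : ∀ g, x * g ≠ g * x → x * g * x = g := by
    intro g hg
    obtain ⟨c, hc, hcx, hcg⟩ := aux_comtr hD x g
    rw [← mem_powers_iff_mem_zpowers, mem_powers_iff_mem_range_orderOf, ho] at hcx
    simp only [Finset.mem_image, Finset.mem_range] at hcx
    obtain ⟨i, hi, rfl⟩ := hcx
    have hconj : orderOf (x * x ^ i) = 4 := by
      have : x * x ^ i = g⁻¹ * x * g := by
        rw [mul_assoc, hc]; group
      rw [this]
      have h5 := orderOf_injective (MulAut.conj g⁻¹).toMonoidHom (MulAut.conj g⁻¹).injective x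
      rw [ho] at h5
      simpa using h5
    interval_cases i
    · exact absurd (by simpa using hc) hg
    · exfalso
      have : (x * x ^ 1) ^ 2 = 1 := by rw [← hx4]; group
      have := Nat.le_of_dvd (by norm_num) (orderOf_dvd_of_pow_eq_one this)
      omega
    · have : x * x ^ 2 * x = 1 := by rw [← hx4]; group
      calc x * g * x = g * (x * x ^ 2 * x) := by rw [hc]; simp only [mul_assoc]
        _ = g := by rw [this, mul_one]
    · exfalso
      have : (x * x ^ 3) = 1 := by rw [← hx4]; group
      rw [this] at hconj
      simp at hconj
  let φ : R → R := fun g => if x * g = g * x then g else g * x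
  have hφ1 : ∀ g, x * g = g * x → φ g = g := fun g h => if_pos h
  have hφ2 : ∀ g, x * g ≠ g * x → φ g = g * x := fun g h => if_neg h
  have hmul : ∀ a b, φ (a * b) = φ a * φ b := by
    intro a b
    by_cases ha : x * a = a * x <;> by_cases hb : x * b = b * x
    · have : x * (a * b) = a * b * x := by rw [← mul_assoc, ha, mul_assoc, hb, mul_assoc]
      rw [hφ1 _ ha, hφ1 _ hb, hφ1 _ this]
    · have : x * (a * b) ≠ a * b * x := by
        rw [← mul_assoc, ha, mul_assoc, mul_assoc]
        intro h; exact hb (mul_left_cancel h)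
      rw [hφ1 _ ha, hφ2 _ hb, hφ2 _ this, mul_assoc]
    · have : x * (a * b) ≠ a * b * x := by
        rw [← mul_assoc, mul_assoc a, ← hb, ← mul_assoc]
        intro h; exact ha (mul_right_cancel h)
      rw [hφ2 _ ha, hφ1 _ hb, hφ2 _ this, mul_assoc, mul_assoc, hb]
    · have h1 := hinv a ha
      have h2 := hinv b hb
      have : x * (a * b) = a * b * x := by
        calc x * (a * b) = x * (a * (x * b * x)) := by rw [h2]
          _ = (x * a * x) * b * x := by simp only [mul_assoc]
          _ = _ := by rw [h1]
      rw [hφ2 _ ha, hφ2 _ hb, hφ1 _ this]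
      calc a * b = a * (x * b * x) := by rw [h2]
        _ = _ := by simp only [mul_assoc]
  let f : R →* R := MonoidHom.mk' φ hmul
  have hinj : Function.Injective f := by
    rw [injective_iff_map_eq_one]
    intro a ha
    change φ a = 1 at ha
    by_cases h : x * a = a * x
    · rwa [hφ1 _ h] at ha
    · rw [hφ2 _ h] at ha
      exfalso
      apply h
      rw [ha, mul_eq_one_iff_eq_inv.1 ha, mul_inv_cancel]
  let α : MulAut R := MulEquiv.ofBijective f (Finite.injective_iff_bijective.1 hinj)
  have hα : ∀ g, α g = φ g := fun g => rfl
  refine ⟨α, aux_map _ _ ?_, ?_⟩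
  · intro y hy
    rw [hα]
    by_cases h : x * y = y * x
    · rwa [hφ1 _ h]
    · rw [hφ2 _ h]
      rcases hxH with h' | h'
      · exact H.mul_mem hy h'
      · exact absurd (Subgroup.mem_center_iff.1 (h' hy) x) h
  · rw [Subgroup.mem_center_iff] at hx
    push Not at hx
    obtain ⟨g, hg⟩ := hx
    refine ⟨g, ?_⟩
    rw [hα, hφ2 _ hg.symm]
    intro h
    exact hg (aux_zcomm ((Subgroup.mul_mem_cancel_left _ (Subgroup.mem_zpowers g)).1 h)).eq.symm

theorem stmt5 (R : Type*) [Group R] [Finite R] (hDedekind : ∀ H : Subgroup R, H.Normal)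
    (hnc : ¬ IsCyclic R) (H : Subgroup R) :
    ∃ α : MulAut R, Subgroup.map α.toMonoidHom H = H ∧
      ∃ x : R, α x ∉ Subgroup.zpowers x := by
  by_cases hcomm : ∀ a b : R, a * b = b * a
  · let : CommGroup R := { ‹Group R› with mul_comm := hcomm }
    exact aux_comm R hnc H
  by_cases hH : H ≤ Subgroup.center R
  · have hT : ¬ (⊤ : Subgroup R) ≤ Subgroup.center R := by
      intro h
      apply hcomm
      intro a b
      exact Subgroup.mem_center_iff.1 (h (Subgroup.mem_top b)) a
    obtain ⟨x, -, hx, ho⟩ := aux_exists_four hDedekind _ hT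
    exact aux_noncomm hDedekind H x hx ho (Or.inr hH)
  · obtain ⟨x, hxH, hx, ho⟩ := aux_exists_four hDedekind _ hH
    exact aux_noncomm hDedekind H x hx ho (Or.inl hxH)
end

section
/- Let p be a prime and let R be a finite p-group that is not cyclic, and suppose there exists a subgroup H of R such that every automorphism of R fixing H setwise is a power automorphism. Then p = 2. -/
lemma aux_comm_pow {G : Type*} [Group G] {y t c : G} (h : y * t = c * (t * y))
    (hcy : Commute c y) (n : ℕ) : y ^ n * t = c ^ n * (t * y ^ n) := by
  induction n with
  | zero => simp
  | succ n ih =>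
    rw [pow_succ' y, mul_assoc, ih, ← mul_assoc, (hcy.pow_left n).eq.symm, mul_assoc,
      ← mul_assoc y, h, pow_succ]
    group

lemma aux_mul_pow {G : Type*} [Group G] {y t c : G} (h : y * t = c * (t * y))
    (hcy : Commute c y) (hct : Commute c t) (n : ℕ) :
    (t * y) ^ n = c ^ (n * (n - 1) / 2) * (t ^ n * y ^ n) := by
  induction n with
  | zero => simp
  | succ n ih =>
    have e : (n + 1) * (n + 1 - 1) / 2 = n * (n - 1) / 2 + n := by
      have := Finset.sum_range_id_mul_two (n + 1)
      rw [← Finset.sum_range_id, ← Finset.sum_range_id, Finset.sum_range_succ]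
    have h1 := aux_comm_pow h hcy n
    have h2 : t ^ n * c ^ n = c ^ n * t ^ n := ((hct.pow_left n).pow_right n).eq.symm
    calc (t * y) ^ (n + 1) = c ^ (n * (n - 1) / 2) * (t ^ n * (y ^ n * t) * y) := by
          rw [pow_succ, ih]; group
      _ = c ^ (n * (n - 1) / 2) * ((t ^ n * c ^ n) * (t * y ^ n * y)) := by
          rw [h1]; group
      _ = _ := by
          rw [h2, e, pow_add, pow_succ t, pow_succ y]; group

lemma aux_odd {p : ℕ} (hp : p.Prime) (h2 : p ≠ 2) : p ∣ p * (p - 1) / 2 := by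
  obtain ⟨k, hk⟩ := hp.odd_of_ne_two h2
  refine ⟨k, ?_⟩
  have : p - 1 = 2 * k := by omega
  rw [this, show p * (2 * k) = (p * k) * 2 by ring, Nat.mul_div_cancel _ (by norm_num)]

/-- in a cyclic subgroup of prime exponent, nontrivial elements generate -/
lemma aux_gen_s14 {G : Type*} [Group G] {p : ℕ} (hp : p.Prime) {h c : G} (hh : h ^ p = 1)
    (hc : c ∈ Subgroup.zpowers h) (hc1 : c ≠ 1) : h ∈ Subgroup.zpowers c := by
  obtain ⟨j, rfl⟩ := Subgroup.mem_zpowers_iff.1 hc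
  have hnd : ¬ (p : ℤ) ∣ j := by
    rintro ⟨k, rfl⟩
    apply hc1
    rw [zpow_mul, zpow_natCast, hh, one_zpow]
  have hcop : IsCoprime (p : ℤ) j := by
    rw [Int.isCoprime_iff_gcd_eq_one]
    have := (Nat.Prime.coprime_iff_not_dvd hp (n := j.natAbs)).2
      (fun h => hnd (Int.natCast_dvd.2 h))
    simpa [Int.gcd] using this
  obtain ⟨a, b, hab⟩ := hcop
  refine Subgroup.mem_zpowers_iff.2 ⟨b, ?_⟩
  rw [← zpow_mul]
  have : j * b = 1 - a * p := by linarith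
  rw [this, zpow_sub, mul_comm, zpow_mul]
  simp [hh]

/-- two elements of order p in the same cyclic subgroup -/
lemma aux_two {G : Type*} [Group G] [Finite G] {p : ℕ} (hp : p.Prime) {x a b : G}
    (ha : a ∈ Subgroup.zpowers x) (hb : b ∈ Subgroup.zpowers x) (hap : a ^ p = 1)
    (hbp : b ^ p = 1) (ha1 : a ≠ 1) : b ∈ Subgroup.zpowers a := by
  by_cases hb1 : b = 1
  · rw [hb1]; exact one_mem _
  have h1 : orderOf a = p := orderOf_eq_prime hap ha1 (hp := ⟨hp⟩)
  obtain ⟨q, hq⟩ : p ∣ orderOf x := by rw [← h1]; exact orderOf_dvd_of_mem_zpowers ha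
  have key : ∀ c ∈ Subgroup.zpowers x, c ^ p = 1 → c ∈ Subgroup.zpowers (x ^ q) := by
    intro c hc hcp
    obtain ⟨i, rfl⟩ := Subgroup.mem_zpowers_iff.1 hc
    rw [← zpow_natCast, ← zpow_mul] at hcp
    have h3 := orderOf_dvd_iff_zpow_eq_one.2 hcp
    rw [hq, Nat.cast_mul, mul_comm i] at h3
    obtain ⟨k, rfl⟩ := (mul_dvd_mul_iff_left (by exact_mod_cast hp.ne_zero)).1 h3
    refine Subgroup.mem_zpowers_iff.2 ⟨k, ?_⟩
    rw [zpow_mul, zpow_natCast]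
  have h4 := aux_gen_s14 hp (h := x ^ q) (c := a)
    (by rw [← pow_mul, mul_comm, ← hq, pow_orderOf_eq_one]) (key a ha hap) ha1
  exact (Subgroup.zpowers_le.2 h4) (key b hb hbp)

lemma aux_cyc {G : Type*} [Group G] [Finite G] {p : ℕ} (hp : p.Prime) (h2 : p ≠ 2)
    (hG : IsPGroup p G) (K : Subgroup G)
    (hK : ∀ k ∈ K, ∀ x, k * x * k⁻¹ ∈ Subgroup.zpowers x)
    (hu : ∀ a ∈ K, ∀ b ∈ K, a ^ p = 1 → b ^ p = 1 → a ≠ 1 → b ∈ Subgroup.zpowers a) :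
    ∃ g, K = Subgroup.zpowers g := by
  have := Fact.mk hp
  obtain ⟨g, hgK, hg⟩ := Set.exists_max_image (K : Set G) orderOf (Set.toFinite _) ⟨1, K.one_mem⟩
  refine ⟨g, le_antisymm ?_ (by simpa using hgK)⟩
  by_contra hcon
  obtain ⟨y0, hy0, hy0g⟩ := SetLike.not_le_iff_exists.1 hcon
  obtain ⟨k0, hk0⟩ := hG y0
  have hex : ∃ k, y0 ^ (p ^ k) ∈ Subgroup.zpowers g := ⟨k0, by rw [hk0]; exact one_mem _⟩
  obtain ⟨y, hyK, hyg, hyp⟩ : ∃ y ∈ K, y ∉ Subgroup.zpowers g ∧ y ^ p ∈ Subgroup.zpowers g := by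
    classical
    have hs := Nat.find_spec hex
    rcases hn : Nat.find hex with _ | k
    · rw [hn] at hs; simp at hs; exact absurd (Subgroup.mem_zpowers_iff.2 hs) hy0g
    · refine ⟨y0 ^ p ^ k, K.pow_mem hy0 _, Nat.find_min hex (by omega), ?_⟩
      rw [hn] at hs
      rwa [← pow_mul, ← pow_succ]
  have hy1 : y ≠ 1 := by rintro rfl; exact hyg (one_mem _)
  have hpy : p ∣ orderOf y := by
    obtain ⟨k, hk⟩ := hG y
    obtain ⟨j, -, hj⟩ := (Nat.dvd_prime_pow hp).1 (orderOf_dvd_of_pow_eq_one hk)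
    rcases j with _ | j
    · simp at hj; exact absurd hj hy1
    · rw [hj]; exact dvd_pow_self _ (by omega)
  have hg1 : g ≠ 1 := by
    rintro rfl
    have := hg y hyK
    rw [orderOf_one] at this
    have := Nat.le_of_dvd (orderOf_pos y) hpy
    have := hp.two_le
    omega
  have hpg : p ∣ orderOf g := by
    obtain ⟨k, hk⟩ := hG g
    obtain ⟨j, -, hj⟩ := (Nat.dvd_prime_pow hp).1 (orderOf_dvd_of_pow_eq_one hk)
    rcases j with _ | j
    · simp at hj; exact absurd hj hg1
    · rw [hj]; exact dvd_pow_self _ (by omega)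
  obtain ⟨m, hm⟩ : ∃ m : ℕ, g ^ m = y ^ p := by
    classical
    have := (mem_zpowers_iff_mem_range_orderOf (x := g) (y := y ^ p)).1 hyp
    simp at this
    obtain ⟨m, -, hm⟩ := this
    exact ⟨m, hm⟩
  have hpm : p ∣ m := by
    by_contra hnd
    have hc : (orderOf g).Coprime m := by
      obtain ⟨k, hk⟩ := hG g
      exact Nat.Coprime.coprime_dvd_left (orderOf_dvd_of_pow_eq_one hk)
        (Nat.Coprime.pow_left _ ((Nat.Prime.coprime_iff_not_dvd hp).2 hnd))
    have h3 : orderOf (g ^ m) = orderOf g := Nat.Coprime.orderOf_pow hc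
    rw [hm, orderOf_pow_of_dvd hp.ne_zero hpy] at h3
    have h4 := hg y hyK
    have := Nat.div_lt_self (orderOf_pos y) hp.one_lt
    omega
  obtain ⟨m', rfl⟩ := hpm
  set t := (g ^ m')⁻¹ with ht
  have htg : t ∈ Subgroup.zpowers g := inv_mem (Subgroup.npow_mem_zpowers g m')
  have htK : t ∈ K := K.inv_mem (K.pow_mem hgK _)
  set c := y * t * y⁻¹ * t⁻¹ with hc
  have hcomm : y * t = c * (t * y) := by rw [hc]; group
  have hcy : Commute c y := by
    have : c ∈ Subgroup.zpowers y := by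
      have h3 := hK t htK y⁻¹
      rw [Subgroup.zpowers_inv] at h3
      have := mul_mem (Subgroup.mem_zpowers y) h3
      rwa [← mul_assoc, ← mul_assoc] at this
    obtain ⟨i, hi⟩ := Subgroup.mem_zpowers_iff.1 this
    rw [← hi]; exact (Commute.refl y).zpow_left i
  have hct : Commute c t := by
    have : c ∈ Subgroup.zpowers t := mul_mem (hK y hyK t) (inv_mem (Subgroup.mem_zpowers t))
    obtain ⟨i, hi⟩ := Subgroup.mem_zpowers_iff.1 this
    rw [← hi]; exact (Commute.refl t).zpow_left i
  have hcp : c ^ p = 1 := by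
    have h3 := aux_comm_pow hcomm hcy p
    have h4 : y ^ p * t = t * y ^ p := by
      rw [← hm, ht]
      exact (((Commute.refl g).pow_left _).pow_right _).inv_right.eq
    rw [h4] at h3
    exact right_eq_mul.1 h3
  have hup : (t * y) ^ p = 1 := by
    rw [aux_mul_pow hcomm hcy hct p]
    obtain ⟨q, hq⟩ := aux_odd hp h2
    rw [hq, pow_mul, hcp, one_pow, one_mul, ← hm, ht, inv_pow, ← pow_mul, mul_comm m', inv_mul_cancel]
  have hug : t * y ∉ Subgroup.zpowers g := fun h => hyg ((Subgroup.mul_mem_cancel_left _ htg).1 h)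
  obtain ⟨q, hq⟩ := hpg
  have hq0 : 0 < q := by
    rcases Nat.eq_zero_or_pos q with rfl | h
    · have := orderOf_pos g; omega
    · exact h
  apply hug
  have h5 := hu (g ^ q) (K.pow_mem hgK _) (t * y) (K.mul_mem htK hyK)
    (by rw [← pow_mul, mul_comm, ← hq, pow_orderOf_eq_one]) hup
    (pow_ne_one_of_lt_orderOf (by omega) (by have := hp.two_le; nlinarith))
  exact (Subgroup.zpowers_le.2 (Subgroup.npow_mem_zpowers g q)) h5

/-- Central elements of order `p`. -/
lemma aux_central {p : ℕ} (hp : p.Prime) (h2 : p ≠ 2) {R : Type*} [Group R] [Finite R]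
    (hpR : IsPGroup p R) (H : Subgroup R)
    (hH : ∀ α : MulAut R, Subgroup.map α.toMonoidHom H = H →
      ∀ x : R, α x ∈ Subgroup.zpowers x) (a b : R) (ha : a ∈ Subgroup.center R)
    (hb : b ∈ Subgroup.center R) (hap : a ^ p = 1) (hbp : b ^ p = 1) (ha1 : a ≠ 1) :
    b ∈ Subgroup.zpowers a := by
  have := Fact.mk hp
  by_cases hb1 : b = 1
  · rw [hb1]; exact one_mem _
  obtain ⟨M, hMi, hHM⟩ : ∃ M : Subgroup R, M.index = p ∧ (H ≤ M ∨ H = ⊤) := by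
    obtain ⟨N, hN⟩ := IsPGroup.iff_card.1 hpR
    have hN0 : N ≠ 0 := by
      rintro rfl
      rw [pow_zero, Nat.card_eq_one_iff_unique] at hN
      exact ha1 (hN.1.elim _ _)
    obtain ⟨N, rfl⟩ := Nat.exists_eq_succ_of_ne_zero hN0
    have hidx : ∀ M : Subgroup R, Nat.card M = p ^ N → M.index = p := by
      intro M hM
      have := M.card_mul_index
      rw [hM, hN, pow_succ] at this
      exact Nat.eq_of_mul_eq_mul_left (pow_pos hp.pos _) this
    by_cases hT : H = ⊤
    · obtain ⟨M, hM⟩ := Sylow.exists_subgroup_card_pow_prime p (G := R) (n := N)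
        (by rw [hN]; exact pow_dvd_pow _ (by omega))
      exact ⟨M, hidx M hM, Or.inr hT⟩
    · obtain ⟨n, hn⟩ := IsPGroup.iff_card.1 (hpR.to_subgroup H)
      have hnN : n ≤ N := by
        have hd := H.card_subgroup_dvd_card
        rw [hN, hn, Nat.pow_dvd_pow_iff_le_right hp.one_lt] at hd
        rcases Nat.lt_or_ge N n with h | h
        · have : n = N + 1 := by omega
          exact absurd (H.eq_top_of_card_eq (by rw [hn, hN, this])) hT
        · exact h
      obtain ⟨M, hM, hle⟩ := Sylow.exists_subgroup_card_pow_prime_le p (G := R) (n := n) (m := N)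
        (by rw [hN]; exact pow_dvd_pow _ (by omega)) H hn hnN
      exact ⟨M, hidx M hM, Or.inl hle⟩
  have hMn : M.Normal := by
    apply Subgroup.normal_of_index_eq_minFac_card
    obtain ⟨N, hN⟩ := IsPGroup.iff_card.1 hpR
    have hN0 : N ≠ 0 := by
      rintro rfl
      rw [pow_zero, Nat.card_eq_one_iff_unique] at hN
      exact ha1 (hN.1.elim _ _)
    rw [hMi, hN, hp.pow_minFac hN0]
  obtain ⟨x, hx⟩ : ∃ x, x ∉ M := by
    by_contra! h
    have : M = ⊤ := eq_top_iff.2 fun x _ => h x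
    rw [this, Subgroup.index_top] at hMi
    exact hp.one_lt.ne hMi
  have key : ∀ z ∈ Subgroup.center R, z ^ p = 1 → z ≠ 1 → z ∈ Subgroup.zpowers x := by
    intro z hz hzp hz1
    have hzc : Nat.card (Subgroup.zpowers z) = p := by
      rw [Nat.card_zpowers]; exact orderOf_eq_prime hzp hz1
    let f0 : R →* Subgroup.zpowers z :=
      (mulEquivOfPrimeCardEq (p := p) hMi hzc).toMonoidHom.comp (QuotientGroup.mk' M)
    let f : R →* R := (Subgroup.zpowers z).subtype.comp f0
    have hfz : ∀ y, f y ∈ Subgroup.zpowers z := fun y => (f0 y).2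
    have hf1 : ∀ y, f y = 1 ↔ y ∈ M := by
      intro y
      simp [f, f0]
    have hzle : Subgroup.zpowers z ≤ Subgroup.center R := by simpa using hz
    have hfc : ∀ y w, w * f y = f y * w := fun y w =>
      Subgroup.mem_center_iff.1 (hzle (hfz y)) w
    have hfp : ∀ y, f y ^ p = 1 := by
      intro y
      obtain ⟨i, hi⟩ := Subgroup.mem_zpowers_iff.1 (hfz y)
      rw [← hi, ← zpow_natCast, ← zpow_mul, mul_comm, zpow_mul, zpow_natCast, hzp, one_zpow]
    have hmk : ∀ c : ℕ, (∀ y, y * f y ^ c = 1 → y = 1) → f x ^ c ∈ Subgroup.zpowers x := by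
      intro c hc
      let α0 : R →* R :=
        { toFun := fun y => y * f y ^ c
          map_one' := by simp
          map_mul' := by
            intro u v
            have e1 : Commute (f u) (f v) := (hfc v (f u))
            have e2 : Commute (f u) v := (hfc u v).symm
            rw [map_mul, e1.mul_pow]
            calc u * v * (f u ^ c * f v ^ c) = u * (v * f u ^ c) * f v ^ c := by group
              _ = u * (f u ^ c * v) * f v ^ c := by rw [(e2.pow_left c).eq]
              _ = _ := by group }
      have hinj : Function.Injective α0 := by
        rw [injective_iff_map_eq_one]
        exact hc
      let α : MulAut R := MulEquiv.ofBijective α0 (Finite.injective_iff_bijective.1 hinj)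
      have hα : ∀ y, α y = y * f y ^ c := fun y => rfl
      have hfix : Subgroup.map α.toMonoidHom H = H := by
        rcases hHM with h | h
        · ext w
          constructor
          · rintro ⟨v, hv, rfl⟩
            have : α v = v := by rw [hα, (hf1 v).2 (h hv)]; simp
            change α v ∈ H
            rwa [this]
          · intro hw
            refine ⟨w, hw, ?_⟩
            change α w = w
            rw [hα, (hf1 w).2 (h hw)]; simp
        · rw [h]
          exact Subgroup.map_top_of_surjective _ α.surjective
      have h3 := hH α hfix x
      rw [hα] at h3
      exact (Subgroup.mul_mem_cancel_left _ (Subgroup.mem_zpowers x)).1 h3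
    have hfx : f x ≠ 1 := fun h => hx ((hf1 x).1 h)
    have hpodd := hp.odd_of_ne_two h2
    have hfin : f x ∈ Subgroup.zpowers x := by
      by_cases hc : ∀ y, y * f y ^ 1 = 1 → y = 1
      · simpa using hmk 1 hc
      · push Not at hc
        obtain ⟨y, hy, hy1⟩ := hc
        have hy' : y = (f y)⁻¹ := by rw [pow_one] at hy; exact eq_inv_of_mul_eq_one_left hy
        have hyz : y ∈ Subgroup.zpowers z := by rw [hy']; exact inv_mem (hfz y)
        have hall : ∀ w ∈ Subgroup.zpowers z, f w = w⁻¹ := by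
          intro w hw
          have h5 : w ∈ Subgroup.zpowers y := Subgroup.zpowers_le.2 (aux_gen_s14 hp hzp hyz hy1) hw
          obtain ⟨i, rfl⟩ := Subgroup.mem_zpowers_iff.1 h5
          have : f y = y⁻¹ := eq_inv_of_mul_eq_one_right (by simpa using hy)
          rw [map_zpow, this, inv_zpow]
        have h6 := hmk 2 (by
          intro w hw
          have hwz : w ∈ Subgroup.zpowers z := by
            rw [eq_inv_of_mul_eq_one_left hw]; exact inv_mem (pow_mem (hfz w) 2)
          rw [hall w hwz] at hw
          have : w⁻¹ = 1 := by rw [← hw]; group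
          simpa using this)
        obtain ⟨k, hk⟩ := hpodd
        have : f x = (f x ^ 2) ^ (k + 1) := by
          rw [← pow_mul, show 2 * (k + 1) = p + 1 by omega, pow_succ, hfp, one_mul]
        rw [this]
        exact pow_mem h6 _
    exact (Subgroup.zpowers_le.2 hfin) (aux_gen_s14 hp hzp (hfz x) hfx)
  exact aux_two hp (key a ha hap ha1) (key b hb hbp hb1) hap hbp ha1

/-- no noncentral order `p` element centralising `H` in the second centre -/
lemma aux_second {p : ℕ} (hp : p.Prime) (h2 : p ≠ 2) {R : Type*} [Group R] [Finite R]
    (H : Subgroup R)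
    (hH : ∀ α : MulAut R, Subgroup.map α.toMonoidHom H = H →
      ∀ x : R, α x ∈ Subgroup.zpowers x) (h z : R) (hz : z ∈ Subgroup.center R)
    (hzp : z ^ p = 1) (hhp : h ^ p = 1) (hhH : ∀ k ∈ H, Commute k h)
    (hc : ∀ x, x * h * x⁻¹ * h⁻¹ ∈ Subgroup.zpowers z) (hn : h ∉ Subgroup.center R) : False := by
  have := Fact.mk hp
  choose φ hφ using fun x => Subgroup.mem_zpowers_iff.1 (hc x)
  have hzc : ∀ w, Commute z w := fun w => (Subgroup.mem_center_iff.1 hz w).symm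
  have hz1 : z ≠ 1 := by
    rintro rfl
    apply hn
    rw [Subgroup.mem_center_iff]
    intro x
    have h3 := hφ x
    rw [one_zpow] at h3
    have h4 : x * h = (x * h * x⁻¹ * h⁻¹) * (h * x) := by group
    rw [h4, ← h3, one_mul]
  have hzo : orderOf z = p := orderOf_eq_prime hzp hz1
  have hconj : ∀ x, x * h * x⁻¹ = z ^ φ x * h := fun x => by rw [hφ x]; group
  have hzmod : ∀ i j : ℤ, (p : ℤ) ∣ i - j → z ^ i = z ^ j := by
    intro i j ⟨k, hk⟩
    rw [show i = j + p * k by linarith, zpow_add, zpow_mul, zpow_natCast, hzp, one_zpow, mul_one]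
  have hhmod : ∀ i j : ℤ, (p : ℤ) ∣ i - j → h ^ i = h ^ j := by
    intro i j ⟨k, hk⟩
    rw [show i = j + p * k by linarith, zpow_add, zpow_mul, zpow_natCast, hhp, one_zpow, mul_one]
  have hφd : ∀ (x : R) (i : ℤ), x * h * x⁻¹ = z ^ i * h → (p : ℤ) ∣ φ x - i := by
    intro x i hi
    rw [hconj] at hi
    have h3 : z ^ (φ x - i) = 1 := by
      rw [zpow_sub, mul_right_cancel hi, mul_inv_cancel]
    have := orderOf_dvd_iff_zpow_eq_one.2 h3
    rwa [hzo] at this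
  have hφ0 : ∀ x, Commute x h → (p : ℤ) ∣ φ x := by
    intro x hx
    have := hφd x 0 (by rw [hx.eq]; simp)
    simpa using this
  have hφm : ∀ x y, (p : ℤ) ∣ φ (x * y) - (φ x + φ y) := by
    intro x y
    apply hφd
    calc x * y * h * (x * y)⁻¹ = x * (y * h * y⁻¹) * x⁻¹ := by group
      _ = x * z ^ φ y * h * x⁻¹ := by rw [hconj]; group
      _ = z ^ φ y * (x * h * x⁻¹) := by rw [← ((hzc x).zpow_left _).eq]; group
      _ = _ := by rw [hconj, zpow_add, ← mul_assoc, ((Commute.refl z).zpow_zpow _ _).eq]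
  obtain ⟨k, hk⟩ := hp.odd_of_ne_two h2
  have hcomm : ∀ (a : ℤ) y, h ^ a * y = y * h ^ a * z ^ (- (φ y * a)) := by
    intro a y
    have h3 : y * h ^ a * y⁻¹ = z ^ (φ y * a) * h ^ a := by
      rw [← conj_zpow, hconj, ((hzc h).zpow_left _).mul_zpow, zpow_mul]
    have h4 : y * h ^ a = z ^ (φ y * a) * h ^ a * y := by rw [← h3]; group
    rw [h4, ← ((hzc _).zpow_left _).eq, zpow_neg]; group
  let α0 : R →* R := MonoidHom.mk' (fun y => y * h ^ φ y * z ^ (k * φ y ^ 2 : ℤ)) (by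
    intro x y
    have e1 := hφm x y
    generalize hA : φ (x * y) = A at *
    have e2 : h ^ A = h ^ φ x * h ^ φ y := by rw [hhmod _ _ e1, zpow_add]
    have e3 : z ^ (k * A ^ 2 : ℤ) = z ^ (-(φ y * φ x)) * z ^ (k * φ x ^ 2 : ℤ) *
        z ^ (k * φ y ^ 2 : ℤ) := by
      rw [← zpow_add, ← zpow_add]
      apply hzmod
      obtain ⟨q, hq⟩ := e1
      rw [show A = φ x + φ y + p * q by linarith]
      refine ⟨k * q * (2 * (φ x + φ y) + p * q) + φ x * φ y, ?_⟩
      have : (p : ℤ) = 2 * k + 1 := by exact_mod_cast hk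
      rw [this]; ring
    have zc : ∀ (i : ℤ) (w : R), w * z ^ i = z ^ i * w := fun i w => ((hzc w).zpow_left i).eq.symm
    calc x * y * h ^ A * z ^ (k * A ^ 2 : ℤ)
        = x * (y * h ^ φ x * z ^ (-(φ y * φ x))) * z ^ (k * φ x ^ 2 : ℤ) * h ^ φ y *
            z ^ (k * φ y ^ 2 : ℤ) := by
          rw [e2, e3]
          have := zc (-(φ y * φ x)) (h ^ φ y)
          have h9 := zc (k * φ x ^ 2 : ℤ) (h ^ φ y)
          simp only [mul_assoc]
          rw [← mul_assoc (h ^ φ y), this, mul_assoc, ← mul_assoc (h ^ φ y), h9, mul_assoc]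
      _ = x * h ^ φ x * (y * z ^ (k * φ x ^ 2 : ℤ)) * h ^ φ y * z ^ (k * φ y ^ 2 : ℤ) := by
          rw [← hcomm]; group
      _ = _ := by rw [zc _ y]; group)
  have hα0 : ∀ y, α0 y = y * h ^ φ y * z ^ (k * φ y ^ 2 : ℤ) := fun y => rfl
  have hfix0 : ∀ y, (p : ℤ) ∣ φ y → α0 y = y := by
    intro y hy
    rw [hα0, hhmod (φ y) 0 (by simpa using hy),
      hzmod (k * φ y ^ 2 : ℤ) 0 (by
        rw [sub_zero]; exact (dvd_pow hy two_ne_zero).mul_left (k : ℤ))]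
    simp
  have hinj : Function.Injective α0 := by
    rw [injective_iff_map_eq_one]
    intro y hy
    have h3 : y = (h ^ φ y * z ^ (k * φ y ^ 2 : ℤ))⁻¹ := by
      apply eq_inv_of_mul_eq_one_left
      rw [← mul_assoc]; exact hy
    have h4 : Commute y h := by
      rw [h3]
      exact (((Commute.refl h).zpow_left _).mul_left ((hzc h).zpow_left _)).inv_left
    rw [← hfix0 y (hφ0 y h4)]; exact hy
  let α : MulAut R := MulEquiv.ofBijective α0 (Finite.injective_iff_bijective.1 hinj)
  have hα : ∀ y, α y = α0 y := fun y => rfl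
  have hfix : Subgroup.map α.toMonoidHom H = H := by
    ext w
    constructor
    · rintro ⟨v, hv, rfl⟩
      have : α v = v := by rw [hα, hfix0 v (hφ0 v (hhH v hv))]
      change α v ∈ H
      rwa [this]
    · intro hw
      refine ⟨w, hw, ?_⟩
      change α w = w
      rw [hα, hfix0 w (hφ0 w (hhH w hw))]
  apply hn
  rw [Subgroup.mem_center_iff]
  intro x
  have h3 := hH α hfix x
  rw [hα, hα0, mul_assoc, Subgroup.mul_mem_cancel_left _ (Subgroup.mem_zpowers x)] at h3
  have h4 : Commute (h ^ φ x) x := by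
    obtain ⟨i, hi⟩ := Subgroup.mem_zpowers_iff.1 h3
    have h5 : h ^ φ x = x ^ i * (z ^ (k * φ x ^ 2 : ℤ))⁻¹ := by rw [hi]; group
    rw [h5]
    exact ((Commute.refl x).zpow_left _).mul_left ((hzc x).zpow_left _).inv_left
  by_cases hd : h ^ φ x = 1
  · have h6 : (p : ℤ) ∣ φ x := by
      have h7 := orderOf_dvd_iff_zpow_eq_one.2 hd
      have h8 : h ≠ 1 := fun h => hn (h ▸ one_mem _)
      rwa [orderOf_eq_prime hhp h8] at h7
    have h7 := hconj x
    rw [hzmod (φ x) 0 (by simpa using h6), zpow_zero, one_mul] at h7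
    exact mul_inv_eq_iff_eq_mul.1 h7
  · obtain ⟨i, hi⟩ := Subgroup.mem_zpowers_iff.1
      (aux_gen_s14 hp hhp (Subgroup.zpow_mem_zpowers h (φ x)) hd)
    have := h4.zpow_left i
    rw [hi] at this
    exact this.eq.symm

/-- Let `p` be a prime and `R` a finite non-cyclic `p`-group admitting a subgroup `H`
such that every automorphism of `R` fixing `H` setwise is a power automorphism.  Then
`p = 2`. -/
theorem stmt14 (p : ℕ) (hp : p.Prime) (R : Type*) [Group R] [Finite R]
    (hpR : IsPGroup p R) (hnc : ¬ IsCyclic R) (H : Subgroup R)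
    (hH : ∀ α : MulAut R, Subgroup.map α.toMonoidHom H = H →
      ∀ x : R, α x ∈ Subgroup.zpowers x) :
    p = 2 := by
  by_contra h2
  have := Fact.mk hp
  let K : Subgroup R := ⨅ x : R, Subgroup.normalizer ((Subgroup.zpowers x : Subgroup R) : Set R)
  have memK : ∀ k, k ∈ K ↔ ∀ x y, y ∈ Subgroup.zpowers x ↔ k * y * k⁻¹ ∈ Subgroup.zpowers x := by
    intro k
    simp only [K, Subgroup.mem_iInf, Subgroup.mem_normalizer_iff]
  have hK : ∀ k ∈ K, ∀ x, k * x * k⁻¹ ∈ Subgroup.zpowers x := fun k hk x =>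
    ((memK k).1 hk x x).1 (Subgroup.mem_zpowers x)
  have hK' : ∀ k, (∀ x, k * x * k⁻¹ ∈ Subgroup.zpowers x) →
      (∀ x, k⁻¹ * x * k ∈ Subgroup.zpowers x) → k ∈ K := by
    intro k h1 h3
    rw [memK]
    intro x y
    constructor
    · intro hy; exact (Subgroup.zpowers_le.2 hy) (h1 y)
    · intro hy
      have := (Subgroup.zpowers_le.2 hy) (h3 (k * y * k⁻¹))
      have e : k⁻¹ * (k * y * k⁻¹) * k = y := by group
      rwa [e] at this
  have hKn : ∀ k ∈ K, ∀ g : R, g * k * g⁻¹ ∈ K := by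
    have conj_mem : ∀ g x y : R, y ∈ Subgroup.zpowers (g⁻¹ * x * g) →
        g * y * g⁻¹ ∈ Subgroup.zpowers x := by
      intro g x y hy
      obtain ⟨i, rfl⟩ := Subgroup.mem_zpowers_iff.1 hy
      refine Subgroup.mem_zpowers_iff.2 ⟨i, ?_⟩
      rw [← conj_zpow]
      congr 1
      group
    have one : ∀ k ∈ K, ∀ g x : R, (g * k * g⁻¹) * x * (g * k * g⁻¹)⁻¹ ∈ Subgroup.zpowers x := by
      intro k hk g x
      have := conj_mem g x _ (hK k hk (g⁻¹ * x * g))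
      convert this using 1
      group
    intro k hk g
    apply hK'
    · exact one k hk g
    · intro x
      have := one k⁻¹ (K.inv_mem hk) g x
      convert this using 1
      group
  have hNK : Subgroup.normalizer (H : Set R) ≤ K := by
    have one : ∀ k ∈ Subgroup.normalizer (H : Set R), ∀ x, k * x * k⁻¹ ∈ Subgroup.zpowers x := by
      intro k hk x
      have hk' := Subgroup.mem_normalizer_iff.1 hk
      have := hH (MulAut.conj k) (by
        ext w
        constructor
        · rintro ⟨v, hv, rfl⟩
          exact (hk' v).1 hv
        · intro hw
          refine ⟨k⁻¹ * w * k, (hk' _).2 ?_, ?_⟩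
          · have e : k * (k⁻¹ * w * k) * k⁻¹ = w := by group
            rwa [e]
          · change k * (k⁻¹ * w * k) * k⁻¹ = w
            group) x
      simpa using this
    intro k hk
    apply hK' k (one k hk)
    intro x
    simpa using one k⁻¹ (inv_mem hk) x
  have hHK : H ≤ K := Subgroup.le_normalizer.trans hNK
  -- order `p` elements of `K` are central in `K`
  have hcK : ∀ h ∈ K, h ^ p = 1 → ∀ k ∈ K, Commute k h := by
    intro h hh hhp k hk
    have c1 : k * h * k⁻¹ * h⁻¹ ∈ Subgroup.zpowers h :=
      mul_mem (hK k hk h) (inv_mem (Subgroup.mem_zpowers h))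
    have c2 : k * h * k⁻¹ * h⁻¹ ∈ Subgroup.zpowers k := by
      have h3 := hK h hh k⁻¹
      rw [Subgroup.zpowers_inv] at h3
      have := mul_mem (Subgroup.mem_zpowers k) h3
      rwa [← mul_assoc, ← mul_assoc] at this
    by_cases hc : k * h * k⁻¹ * h⁻¹ = 1
    · have e : k * h = (k * h * k⁻¹ * h⁻¹) * (h * k) := by group
      rw [hc, one_mul] at e
      exact e
    · have h4 := (Subgroup.zpowers_le.2 c2) (aux_gen_s14 hp hhp c1 hc)
      obtain ⟨i, rfl⟩ := Subgroup.mem_zpowers_iff.1 h4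
      exact (Commute.refl k).zpow_right i
  have hcen := aux_central hp h2 hpR H hH
  have hA : ∀ h ∈ K, h ^ p = 1 → h ∈ Subgroup.center R := by
    obtain ⟨n, hn⟩ := Subgroup.nilpotent_iff_lowerCentralSeries.1 (hpR.isNilpotent)
    have claim : ∀ j, j ≤ n → ∀ h ∈ K, h ^ p = 1 →
        h ∈ (⊤ : Subgroup R).lowerCentralSeries (n - j) → h ∈ Subgroup.center R := by
      intro j
      induction j with
      | zero =>
        intro _ h _ _ hh
        rw [Nat.sub_zero, hn, Subgroup.mem_bot] at hh
        rw [hh]; exact one_mem _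
      | succ j ih =>
        intro hj h hhK hhp hh
        by_contra hnc'
        have hS : ∀ x, x * h * x⁻¹ * h⁻¹ ∈ K ∧ (x * h * x⁻¹ * h⁻¹) ^ p = 1 := by
          intro x
          have m1 := hKn h hhK x
          refine ⟨mul_mem m1 (inv_mem hhK), ?_⟩
          rw [((hcK h hhK hhp _ m1).inv_right).mul_pow, conj_pow, hhp, inv_pow, hhp]
          simp
        have hSc : ∀ x, x * h * x⁻¹ * h⁻¹ ∈ Subgroup.center R := by
          intro x
          refine ih (by omega) _ (hS x).1 (hS x).2 ?_
          rw [show n - j = (n - (j + 1)) + 1 by omega, Subgroup.lowerCentralSeries_succ]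
          have := Subgroup.commutator_mem_commutator hh (Subgroup.mem_top x)
          have := inv_mem this
          rwa [commutatorElement_inv, commutatorElement_def] at this
        have : ∃ x, x * h * x⁻¹ * h⁻¹ ≠ 1 := by
          by_contra! hall
          apply hnc'
          rw [Subgroup.mem_center_iff]
          intro x
          have e : x * h = (x * h * x⁻¹ * h⁻¹) * (h * x) := by group
          rw [e, hall, one_mul]
        obtain ⟨x0, hx0⟩ := this
        exact aux_second hp h2 H hH h _ (hSc x0) (hS x0).2 hhp
          (fun k hk => hcK h hhK hhp k (hHK hk))
          (fun x => hcen _ _ (hSc x0) (hSc x) (hS x0).2 (hS x).2 hx0) hnc'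
    intro h hh hhp
    refine claim n le_rfl h hh hhp ?_
    simp
  obtain ⟨g, hg⟩ := aux_cyc hp h2 hpR K hK
    (fun a ha b hb hap hbp ha1 => hcen a b (hA a ha hap) (hA b hb hbp) hap hbp ha1)
  have hnorm : ∀ x, x ∈ Subgroup.normalizer (H : Set R) := by
    have one : ∀ x, ∀ k ∈ H, x * k * x⁻¹ ∈ H := by
      intro x k hk
      have hgx : x * g * x⁻¹ ∈ Subgroup.zpowers g := by
        rw [← hg]; exact hKn g (by rw [hg]; exact Subgroup.mem_zpowers g) x
      obtain ⟨i, hi⟩ := Subgroup.mem_zpowers_iff.1 hgx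
      have hkg := hHK hk
      rw [hg] at hkg
      obtain ⟨j, rfl⟩ := Subgroup.mem_zpowers_iff.1 hkg
      rw [← conj_zpow, ← hi, ← zpow_mul, mul_comm, zpow_mul]
      exact zpow_mem hk i
    intro x
    rw [Subgroup.mem_normalizer_iff]
    intro k
    refine ⟨one x k, fun h => ?_⟩
    have := one x⁻¹ _ h
    have e : x⁻¹ * (x * k * x⁻¹) * x⁻¹⁻¹ = k := by group
    rwa [e] at this
  exact hnc ⟨g, fun x => Subgroup.mem_zpowers_iff.1 (hg ▸ hNK (hnorm x))⟩
end
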